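/- If the restriction of the irreducible algebraic representation V_n(λ⁺,λ⁻) of GL_n(ℂ) to GL_{n-m}(ℂ) (embedded in the last n−m coordinates) contains a trivial constituent, then ℓ(λ⁺) + ℓ(λ⁻) ≤ 2m. -/

import Mathlib

open Matrix

noncomputable section

/-- The diagonal torus element of `GL_n(ℂ)` with diagonal entries `t i`. -/
def diagGL {n : ℕ} (t : Fin n → ℂˣ) : GL (Fin n) ℂ :=
  ⟨Matrix.diagonal fun i => (t i : ℂ), Matrix.diagonal fun i => (((t i)⁻¹ : ℂˣ) : ℂ),
    by simp [Matrix.diagonal_mul_diagonal, ← Units.val_mul],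
    by simp [Matrix.diagonal_mul_diagonal, ← Units.val_mul]⟩

/-- An element of `GL_n(ℂ)` is upper unitriangular. -/
def IsUnitri {n : ℕ} (g : GL (Fin n) ℂ) : Prop :=
  (∀ i, (g : Matrix (Fin n) (Fin n) ℂ) i i = 1) ∧
    ∀ i j : Fin n, j < i → (g : Matrix (Fin n) (Fin n) ℂ) i j = 0

/-- The number of positive entries of an integral weight `ω`; for a dominant weight
labeled by a bipartition `(λ⁺, λ⁻)` this is the length `ℓ(λ⁺)`. -/
def lenPos {n : ℕ} (ω : Fin n → ℤ) : ℕ := (Finset.univ.filter fun i => 0 < ω i).card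

/-- The number of negative entries of an integral weight `ω`; for a dominant weight
labeled by a bipartition `(λ⁺, λ⁻)` this is the length `ℓ(λ⁻)`. -/
def lenNeg {n : ℕ} (ω : Fin n → ℤ) : ℕ := (Finset.univ.filter fun i => ω i < 0).card

/-- `ρ` is (a model of) the irreducible representation `V_n(λ⁺,λ⁻)` of `GL_n(ℂ)` with
highest weight the antitone integer vector `ω = (λ⁺, 0, …, 0, −λ⁻)`: it is finite
dimensional and irreducible, and it has a nonzero highest weight vector fixed by the
upper unitriangular subgroup on which the diagonal torus acts by the character `ω`. -/
structure IsHWRep (n : ℕ) {V : Type*} [AddCommGroup V] [Module ℂ V]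
    (ρ : GL (Fin n) ℂ →* (V →ₗ[ℂ] V)ˣ) (ω : Fin n → ℤ) : Prop where
  finite : FiniteDimensional ℂ V
  dominant : Antitone ω
  irred : ∀ W : Submodule ℂ V,
    (∀ g : GL (Fin n) ℂ, ∀ v ∈ W, (ρ g : V →ₗ[ℂ] V) v ∈ W) → W = ⊥ ∨ W = ⊤
  exists_hw : ∃ v : V, v ≠ 0 ∧
    (∀ g : GL (Fin n) ℂ, IsUnitri g → (ρ g : V →ₗ[ℂ] V) v = v) ∧
    ∀ t : Fin n → ℂˣ,
      (ρ (diagGL t) : V →ₗ[ℂ] V) v = (∏ i, (t i : ℂ) ^ (ω i)) • v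

/-- Block-diagonal embedding `A ↦ diag(A, 1)` as a multiplicative monoid map on matrices. -/
def blockTLHom (m k : ℕ) :
    Matrix (Fin m) (Fin m) ℂ →* Matrix (Fin (m + k)) (Fin (m + k)) ℂ where
  toFun A := Matrix.reindex finSumFinEquiv finSumFinEquiv (Matrix.fromBlocks A 0 0 1)
  map_one' := by simp [Matrix.fromBlocks_one]
  map_mul' A B := by
    simp only [Matrix.reindex_apply, Matrix.submatrix_mul_equiv,
      Matrix.fromBlocks_multiply]
    simp

/-- Block-diagonal embedding `A ↦ diag(1, A)` as a multiplicative monoid map on matrices. -/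
def blockBRHom (m k : ℕ) :
    Matrix (Fin k) (Fin k) ℂ →* Matrix (Fin (m + k)) (Fin (m + k)) ℂ where
  toFun A := Matrix.reindex finSumFinEquiv finSumFinEquiv (Matrix.fromBlocks 1 0 0 A)
  map_one' := by simp [Matrix.fromBlocks_one]
  map_mul' A B := by
    simp only [Matrix.reindex_apply, Matrix.submatrix_mul_equiv,
      Matrix.fromBlocks_multiply]
    simp

/-- The top-left block embedding `GL_m(ℂ) → GL_{m+k}(ℂ)`. -/
def embTL (m k : ℕ) : GL (Fin m) ℂ →* GL (Fin (m + k)) ℂ := Units.map (blockTLHom m k)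

/-- The bottom-right block embedding `GL_k(ℂ) → GL_{m+k}(ℂ)`. -/
def embBR (m k : ℕ) : GL (Fin k) ℂ →* GL (Fin (m + k)) ℂ := Units.map (blockBRHom m k)

/-- The truncation of a dominant weight on `GL_{m+k}` labeled by a bipartition
`(λ⁺, λ⁻)` with `ℓ(λ⁺) + ℓ(λ⁻) ≤ m` to the dominant weight on `GL_m` labeled by the
same bipartition. -/
def restrWeight (m k : ℕ) (ω : Fin (m + k) → ℤ) : Fin m → ℤ := fun i =>
  if (i : ℕ) < lenPos ω then ω ⟨(i : ℕ), by have := i.isLt; omega⟩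
  else if m - lenNeg ω ≤ (i : ℕ) then ω ⟨(i : ℕ) + k, by have := i.isLt; omega⟩
  else 0

end

/-!
An irreducible `V` of highest weight `ω` carries a nonzero functional `x` fixed by the lower
unipotent group. Since the lower unipotent orbit of the highest weight vector spans `V` (big cell
plus polynomiality along unipotent one-parameter groups), `x` is scaled by the diagonal torus
through `ω`. Let `v` be invariant under `GL_k` and let `0 < ω j`. If the first `m` entries of row
`j` of `g` vanish, then `x (g • v) = 0`: moving an element of `GL_k` past `g` rescales row `j` by
`N + 1` up to unipotent factors, so that a polynomial in `N` times `(N + 1) ^ ω j` is constant. If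
more than `m` weights are positive, lower row operations, which do not affect `x (g • v)`, clear
the first `m` entries of such a row of any `g`. Hence the whole orbit of `v` lies in the kernel of
`x`, contradicting irreducibility. Twisting by the inverse transpose exchanges `λ⁺` and `λ⁻`.
-/

section UnipotentEnd

open Polynomial Module

variable {K V : Type*} [Field K] [AddCommGroup V] [Module K V]

lemma isNilpotent_sub_one_of_forall_hasEigenvalue_eq_one [IsAlgClosed K] [FiniteDimensional K V]
    {f : End K V} (h : ∀ μ, f.HasEigenvalue μ → μ = 1) : IsNilpotent (f - 1) := by
  have htop : f.maxGenEigenspace 1 = ⊤ := by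
    refine top_le_iff.1 (f.iSup_maxGenEigenspace_eq_top ▸ iSup_le fun μ ↦ ?_)
    rcases eq_or_ne μ 1 with rfl | hμ
    · exact le_rfl
    · rw [End.maxGenEigenspace, not_not.1 fun hne ↦ hμ (h μ (End.HasUnifEigenvalue.lt one_pos hne))]
      exact bot_le
  refine (LinearMap.isNilpotent_iff_charpoly _).2 ((LinearMap.charpoly_eq_X_pow_iff _).2 fun w ↦ ?_)
  simpa using End.mem_maxGenEigenspace f 1 w |>.1 (htop ▸ Submodule.mem_top)

-- Every power map permutes the spectrum, so each eigenvalue `μ` satisfies `μ ^ M = 1 = 1 ^ M` for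
-- some `0 < M`, and `μ = 1` by injectivity.
lemma isNilpotent_sub_one_of_isConj_pow [IsAlgClosed K] [FiniteDimensional K V] {f : (End K V)ˣ}
    (h : ∀ N : ℕ, 0 < N → IsConj f (f ^ N)) : IsNilpotent ((f : End K V) - 1) := by
  refine isNilpotent_sub_one_of_forall_hasEigenvalue_eq_one fun μ hμ ↦ ?_
  set S := spectrum K (f : End K V)
  have hfin : S.Finite := End.finite_spectrum _
  have himage (N : ℕ) (hN : 0 < N) : (· ^ N) '' S = S := by
    obtain ⟨g, hg⟩ := isConj_iff.1 (h N hN)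
    rw [← spectrum.map_pow_of_pos _ hN, ← Units.val_pow_eq_pow_val, ← hg]
    exact spectrum.units_conjugate
  have hpow (N : ℕ) (hN : 0 < N) {x : K} (hx : x ∈ S) : x ^ N ∈ S :=
    himage N hN ▸ Set.mem_image_of_mem _ hx
  have hμS : μ ∈ S := End.hasEigenvalue_iff_mem_spectrum.1 hμ
  have hμ0 : μ ≠ 0 := fun h0 ↦ spectrum.zero_notMem K f.isUnit (h0 ▸ hμS)
  obtain ⟨M, hM, hμM⟩ : ∃ M, 0 < M ∧ μ ^ M = 1 := by
    obtain ⟨a, -, b, -, hab, heq⟩ := Set.infinite_univ.exists_lt_map_eq_of_mapsTo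
      (f := fun N : ℕ ↦ μ ^ (N + 1)) (fun N _ ↦ hpow _ N.succ_pos hμS) hfin
    refine ⟨b - a, Nat.sub_pos_of_lt hab, mul_left_cancel₀ (pow_ne_zero (a + 1) hμ0) ?_⟩
    rw [← pow_add, mul_one, heq]
    congr 1
    lia
  have hinj : Set.InjOn (· ^ M) S := Set.injOn_of_ncard_image_eq (by rw [himage M hM]) hfin
  exact hinj hμS (hμM ▸ hpow M hM hμS) (by simp [hμM])

-- If `f w ≠ w`, the last nonzero `(f - 1) ^ p w` is an eigenvector of `D` for `M ^ p * c`, because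
-- `D * (f - 1) = (f - 1) * (1 + f + ⋯ + f ^ (M - 1)) * D` and the sum acts on it as `M`.
lemma apply_eq_self_of_apply_eq_smul {f D : End K V} {M : ℕ}
    (hf : IsNilpotent (f - 1)) (hD : D * f = f ^ M * D) {c : K} {w : V} (hw : D w = c • w)
    (hc : ∀ p : ℕ, 0 < p → ¬ D.HasEigenvalue (M ^ p * c)) : f w = w := by
  by_contra hfw
  set g : End K V := f - 1
  set S : End K V := ∑ i ∈ Finset.range M, f ^ i
  have hS : Commute S g :=
    Commute.sum_left _ _ _ fun i _ ↦ ((Commute.refl f).sub_right (.one_right f)).pow_left i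
  have hDS : SemiconjBy D g (g * S) := by
    rw [← hS.eq, geom_sum_mul]
    exact SemiconjBy.sub_right hD (SemiconjBy.one_right D)
  obtain ⟨p, hp, hp1⟩ : ∃ p, (g ^ (p + 1)) w ≠ 0 ∧ (g ^ (p + 2)) w = 0 := by
    have hex : ∃ p, (g ^ (p + 1)) w = 0 :=
      hf.imp fun p hp ↦ by simp [pow_succ' g p, hp]
    classical
    rcases hfind : Nat.find hex with _ | p
    · exact absurd (by simpa [hfind, g, sub_eq_zero] using Nat.find_spec hex) hfw
    · exact ⟨p, Nat.find_min hex (by lia), by simpa [hfind] using Nat.find_spec hex⟩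
  set u := (g ^ (p + 1)) w
  have hfu : f u = u := by
    rw [pow_succ', End.mul_apply, LinearMap.sub_apply, sub_eq_zero] at hp1
    exact hp1
  have hSu (r : ℕ) : (S ^ r) u = (M ^ r : K) • u := by
    induction r with
    | zero => simp
    | succ r ih =>
      have hfi (i : ℕ) : (f ^ i) u = u := by
        rw [End.pow_apply]
        exact Function.iterate_fixed hfu i
      simp [pow_succ, S, LinearMap.sum_apply, hfi, ← Nat.cast_smul_eq_nsmul K, ih, smul_smul,
        mul_comm]
  refine hc (p + 1) p.succ_pos (End.hasEigenvalue_of_hasEigenvector (x := u) ⟨?_, hp⟩)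
  rw [End.mem_eigenspace_iff]
  calc D u = (D * g ^ (p + 1)) w := rfl
    _ = (S ^ (p + 1)) ((g ^ (p + 1)) (D w)) := by
      rw [hDS.pow_right, hS.symm.mul_pow, (hS.symm.pow_pow _ _).eq]
      rfl
    _ = (M ^ (p + 1) * c) • u := by rw [hw, map_smul, map_smul, hSu, smul_smul, mul_comm]

lemma exists_ne_zero_forall_apply_eq_self {V : Type*} [AddCommGroup V] [Module ℂ V]
    [FiniteDimensional ℂ V] [Nontrivial V] (D : (End ℂ V)ˣ) {S : Set (End ℂ V)}
    (hS : ∀ f ∈ S, IsNilpotent (f - 1) ∧ ∃ M : ℕ, 1 < M ∧ ↑D * f = f ^ M * ↑D) :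
    ∃ w : V, w ≠ 0 ∧ ∀ f ∈ S, f w = w := by
  obtain ⟨c, hcD, hmax⟩ := Set.exists_max_image (spectrum ℂ (D : End ℂ V)) (‖·‖)
    (End.finite_spectrum _) (spectrum.nonempty_of_isAlgClosed_of_finiteDimensional ℂ _)
  obtain ⟨w, hw⟩ := (End.hasEigenvalue_iff_mem_spectrum.2 hcD).exists_hasEigenvector
  refine ⟨w, hw.2, fun f hfS ↦ ?_⟩
  obtain ⟨hf, M, hM, hD⟩ := hS f hfS
  refine apply_eq_self_of_apply_eq_smul hf hD hw.apply_eq_smul fun p hp hev ↦ ?_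
  have hle := hmax _ (End.hasEigenvalue_iff_mem_spectrum.1 hev)
  have hc : 0 < ‖c‖ := norm_pos_iff.2 fun h0 ↦ spectrum.zero_notMem ℂ D.isUnit (h0 ▸ hcD)
  have hMp : (1 : ℝ) < (M : ℝ) ^ p := one_lt_pow₀ (by exact_mod_cast hM) hp.ne'
  simp only [norm_mul, norm_pow, Complex.norm_natCast] at hle
  nlinarith

variable [CharZero K] {f : End K V}

lemma exists_polynomial_eval_eq_pow_apply (hf : IsNilpotent (f - 1)) (ξ : Dual K V) (v : V) :
    ∃ P : K[X], ∀ N : ℕ, P.eval (N : K) = ξ ((f ^ N) v) := by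
  obtain ⟨d, hd⟩ := hf
  refine ⟨∑ i ∈ Finset.range d,
    C (ξ (((f - 1) ^ i) v) / i.factorial) * descPochhammer K i, fun N ↦ ?_⟩
  have hexp : f ^ N = ∑ i ∈ Finset.range d, (N.choose i : K) • (f - 1) ^ i := by
    calc f ^ N = ∑ i ∈ Finset.range (N + 1), (N.choose i : K) • (f - 1) ^ i := by
          conv_lhs => rw [← sub_add_cancel f 1, (Commute.one_right _).add_pow]
          simp only [one_pow, mul_one, Nat.cast_smul_eq_nsmul, nsmul_eq_mul']
      _ = ∑ i ∈ Finset.range (max d (N + 1)), (N.choose i : K) • (f - 1) ^ i := by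
          refine Finset.sum_subset (by simp) fun i _ hi ↦ ?_
          simp only [Finset.mem_range, not_lt] at hi
          simp [Nat.choose_eq_zero_of_lt hi]
      _ = ∑ i ∈ Finset.range d, (N.choose i : K) • (f - 1) ^ i := by
          refine (Finset.sum_subset (by simp) fun i _ hi ↦ ?_).symm
          simp only [Finset.mem_range, not_lt] at hi
          simp [pow_eq_zero_of_le hi hd]
  simp [hexp, eval_finsetSum, Nat.cast_choose_eq_descPochhammer_div, div_mul_comm]

lemma mem_of_infinite_setOf_pow_apply_mem (hf : IsNilpotent (f - 1)) {W : Submodule K V} {w : V}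
    (h : {N : ℕ | (f ^ N) w ∈ W}.Infinite) : w ∈ W := by
  by_contra hw
  obtain ⟨ξ, hξw, hξW⟩ := W.exists_le_ker_of_notMem hw
  obtain ⟨P, hP⟩ := exists_polynomial_eval_eq_pow_apply hf ξ w
  have hP0 : P = 0 := by
    refine P.eq_zero_of_infinite_isRoot ((h.image Nat.cast_injective.injOn).mono ?_)
    rintro _ ⟨N, hN, rfl⟩
    exact (hP N).trans (hξW hN)
  exact hξw (by simpa [hP0] using (hP 0).symm)

lemma eq_zero_of_succ_pow_mul_eq (hf : IsNilpotent (f - 1)) {ξ : Dual K V} {v : V} {q : ℕ}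
    (hq : q ≠ 0) {c : K} (h : ∀ N : ℕ, (N + 1 : K) ^ q * ξ ((f ^ N) v) = c) : c = 0 := by
  obtain ⟨P, hP⟩ := exists_polynomial_eval_eq_pow_apply hf ξ v
  have hpoly : (X + 1) ^ q * P = C c := by
    refine eq_of_infinite_eval_eq _ _
      ((Set.infinite_range_of_injective (Nat.cast_injective (R := K))).mono ?_)
    rintro _ ⟨N, rfl⟩
    simp [hP, h]
  simpa [hq] using (congrArg (eval (-1)) hpoly).symm

end UnipotentEnd

section RankOne

variable {ι K : Type*} [Fintype ι] [DecidableEq ι] [Field K]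

/-- The invertible matrix `1 + a bᵀ`. Besides the transvections (`bᵀ a = 0`) this covers the
diagonal matrices differing from `1` in a single entry. -/
noncomputable def rankOneGL (a b : ι → K) (h : 1 + b ⬝ᵥ a ≠ 0) : GL ι K :=
  Matrix.GeneralLinearGroup.mkOfDetNeZero (1 + vecMulVec a b) <| by
    rwa [vecMulVec_eq Unit, det_one_add_replicateCol_mul_replicateRow]

@[simp]
lemma coe_rankOneGL (a b : ι → K) (h : 1 + b ⬝ᵥ a ≠ 0) :
    (rankOneGL a b h : Matrix ι ι K) = 1 + vecMulVec a b := rfl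

lemma pow_eq_one_add_vecMulVec {R : Type*} [CommRing R] {g : Matrix ι ι R} {a b : ι → R}
    (hab : b ⬝ᵥ a = 0) (hg : g = 1 + vecMulVec a b) (N : ℕ) :
    g ^ N = 1 + vecMulVec ((N : R) • a) b := by
  induction N with
  | zero => simp
  | succ N ih =>
    rw [pow_succ, ih, hg, add_mul, one_mul, vecMulVec_mul, vecMul_add, vecMul_one, vecMul_vecMulVec,
      hab, zero_smul, add_zero, smul_vecMulVec, smul_vecMulVec, Nat.cast_succ]
    module

lemma isConj_pow_of_eq_one_add_vecMulVec [CharZero K] {g : GL ι K} {a b : ι → K}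
    (hab : b ⬝ᵥ a = 0) (hg : (g : Matrix ι ι K) = 1 + vecMulVec a b) {N : ℕ} (hN : 0 < N) :
    IsConj g (g ^ N) := by
  rcases eq_or_ne a 0 with rfl | ha
  · obtain rfl : g = 1 := Units.ext (by simpa using hg)
    simp
  obtain ⟨i, hi⟩ := Function.ne_iff.1 ha
  have hN' : (N : K) ≠ 0 := Nat.cast_ne_zero.2 hN.ne'
  let c : ι → K := Pi.single i (a i)⁻¹
  have hca : c ⬝ᵥ a = 1 := by simpa [c] using inv_mul_cancel₀ hi
  let D := rankOneGL ((N - 1 : K) • a) c (by simpa [hca] using hN')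
  refine isConj_iff.2 ⟨D, mul_inv_eq_iff_eq_mul.2 (Units.ext ?_)⟩
  have hDa : (D : Matrix ι ι K) *ᵥ a = (N : K) • a := by
    simp [D, add_mulVec, vecMulVec_mulVec, hca, sub_smul]
  have hbD : b ᵥ* (D : Matrix ι ι K) = b := by
    simp [D, vecMul_add, vecMul_smul, vecMul_vecMulVec, hab]
  rw [Units.val_mul, Units.val_mul, Units.val_pow_eq_pow_val, pow_eq_one_add_vecMulVec hab hg, hg,
    mul_add, add_mul, mul_one, one_mul, mul_vecMulVec, vecMulVec_mul, hDa, hbD]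

lemma isNilpotent_sub_one_of_eq_one_add_vecMulVec [CharZero K] {k V : Type*} [Field k]
    [IsAlgClosed k] [AddCommGroup V] [Module k V] [FiniteDimensional k V]
    (σ : Representation k (GL ι K) V) {g : GL ι K} {a b : ι → K} (hab : b ⬝ᵥ a = 0)
    (hg : (g : Matrix ι ι K) = 1 + vecMulVec a b) : IsNilpotent (σ g - 1) :=
  isNilpotent_sub_one_of_isConj_pow (f := σ.asGroupHom g) fun _ hN ↦ by
    rw [← map_pow]
    exact σ.asGroupHom.map_isConj (isConj_pow_of_eq_one_add_vecMulVec hab hg hN)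

end RankOne

section LowerUnipotent

variable {n : ℕ}

lemma transvection_eq_one_add_vecMulVec {ι R : Type*} [DecidableEq ι] [CommRing R] (i j : ι)
    (c : R) :
    transvection i j c = 1 + vecMulVec (Pi.single i c) (Pi.single j 1) := by
  ext k l
  rw [transvection, Matrix.add_apply, Matrix.add_apply, single_apply, vecMulVec_apply]
  simp [Pi.single_apply, eq_comm, ← ite_and, and_comm]

/-- The group of lower unitriangular matrices, presented by the elementary transvections
generating it. -/
def lowerUnipotent (n : ℕ) : Subgroup (GL (Fin n) ℂ) :=
  Subgroup.closure {g | ∃ i j c, j < i ∧ (g : Matrix (Fin n) (Fin n) ℂ) = transvection i j c}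

lemma mem_lowerUnipotent_of_eq_transvection {g : GL (Fin n) ℂ} {i j : Fin n} {c : ℂ} (hij : j < i)
    (hg : (g : Matrix (Fin n) (Fin n) ℂ) = transvection i j c) : g ∈ lowerUnipotent n :=
  Subgroup.subset_closure ⟨i, j, c, hij, hg⟩

lemma mem_lowerUnipotent_of_eq_one_add_vecMulVec {g : GL (Fin n) ℂ} {a b : Fin n → ℂ}
    (hab : ∀ i j, a i ≠ 0 → b j ≠ 0 → j < i)
    (hg : (g : Matrix (Fin n) (Fin n) ℂ) = 1 + vecMulVec a b) : g ∈ lowerUnipotent n := by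
  have hba (i : Fin n) : a i = 0 ∨ b i = 0 := by
    by_contra! h
    exact (hab i i h.1 h.2).false
  have key (s : Finset (Fin n × Fin n)) : ∃ u ∈ lowerUnipotent n,
      (u : Matrix (Fin n) (Fin n) ℂ) = 1 + ∑ p ∈ s, single p.1 p.2 (a p.1 * b p.2) := by
    induction s using Finset.induction with
    | empty => exact ⟨1, one_mem _, by simp⟩
    | insert p s hp ih =>
      obtain ⟨u, hu, hu'⟩ := ih
      rcases eq_or_ne (a p.1 * b p.2) 0 with h0 | h0
      · exact ⟨u, hu, by simp [Finset.sum_insert hp, h0, hu']⟩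
      have hlt : p.2 < p.1 := hab _ _ (left_ne_zero_of_mul h0) (right_ne_zero_of_mul h0)
      let e : GL (Fin n) ℂ := SpecialLinearGroup.transvection hlt.ne' (a p.1 * b p.2)
      refine ⟨u * e, mul_mem hu (mem_lowerUnipotent_of_eq_transvection hlt rfl), ?_⟩
      have hzero (q : Fin n × Fin n) :
          single q.1 q.2 (a q.1 * b q.2) * single p.1 p.2 (a p.1 * b p.2) = 0 := by
        rcases eq_or_ne q.2 p.1 with h | h
        · have hq : b q.2 = 0 := h ▸ (hba p.1).resolve_left (left_ne_zero_of_mul h0)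
          simp [hq]
        · simp [h]
      have he : (e : Matrix (Fin n) (Fin n) ℂ) = 1 + single p.1 p.2 (a p.1 * b p.2) := rfl
      rw [Units.val_mul, hu', he, mul_add, mul_one, add_mul, one_mul, Finset.sum_mul,
        Finset.sum_eq_zero fun q _ ↦ hzero q, Finset.sum_insert hp]
      abel
  obtain ⟨u, hu, hu'⟩ := key Finset.univ
  convert hu
  refine Units.ext (hg.trans (hu'.trans ?_).symm)
  rw [matrix_eq_sum_single (vecMulVec a b), Fintype.sum_prod_type]
  rfl

@[simp]
lemma coe_diagGL (t : Fin n → ℂˣ) :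
    (diagGL t : Matrix (Fin n) (Fin n) ℂ) = diagonal fun i ↦ (t i : ℂ) := rfl

lemma diagGL_mul_eq_of_transvection (t : Fin n → ℂˣ) {i j : Fin n} {c d : ℂ} {g g' : GL (Fin n) ℂ}
    (hg : (g : Matrix (Fin n) (Fin n) ℂ) = transvection i j c)
    (hg' : (g' : Matrix (Fin n) (Fin n) ℂ) = transvection i j d) (hd : t i * c = d * t j) :
    diagGL t * g = g' * diagGL t := by
  refine Units.ext ?_
  rw [Units.val_mul, Units.val_mul, hg, hg', transvection_eq_one_add_vecMulVec,
    transvection_eq_one_add_vecMulVec, mul_add, add_mul, mul_one, one_mul, mul_vecMulVec,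
    vecMulVec_mul, coe_diagGL, diagonal_mulVec_single, single_vecMul_diagonal, hd]
  congr 1
  ext k l
  simp [vecMulVec_apply, Pi.single_apply]

lemma diagGL_mul_mul_inv_mem_lowerUnipotent (t : Fin n → ℂˣ) {u : GL (Fin n) ℂ}
    (hu : u ∈ lowerUnipotent n) : diagGL t * u * (diagGL t)⁻¹ ∈ lowerUnipotent n := by
  suffices h : lowerUnipotent n ≤ (lowerUnipotent n).comap (MulAut.conj (diagGL t)).toMonoidHom from
    h hu
  refine (Subgroup.closure_le _).2 ?_
  rintro g ⟨i, j, c, hij, hg⟩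
  let g' : GL (Fin n) ℂ := SpecialLinearGroup.transvection hij.ne' (t i * c / t j)
  have hgg' : diagGL t * g = g' * diagGL t :=
    diagGL_mul_eq_of_transvection t hg rfl (by field_simp)
  simpa [hgg'] using mem_lowerUnipotent_of_eq_transvection (g := g') hij rfl

lemma exists_ne_zero_forall_lowerUnipotent_apply_eq_self {V : Type*} [AddCommGroup V] [Module ℂ V]
    [FiniteDimensional ℂ V] [Nontrivial V] (σ : Representation ℂ (GL (Fin n) ℂ) V) :
    ∃ x : V, x ≠ 0 ∧ ∀ u ∈ lowerUnipotent n, σ u x = x := by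
  let t : Fin n → ℂˣ := fun i ↦ Units.mk0 2 two_ne_zero ^ (i : ℕ)
  obtain ⟨x, hx, hfix⟩ := exists_ne_zero_forall_apply_eq_self (σ.asGroupHom (diagGL t))
    (S := σ '' {g | ∃ i j c, j < i ∧ (g : Matrix (Fin n) (Fin n) ℂ) = transvection i j c}) <| by
    rintro _ ⟨g, ⟨i, j, c, hij, hg⟩, rfl⟩
    have hg' := hg.trans (transvection_eq_one_add_vecMulVec i j c)
    have hdot : (Pi.single j 1 : Fin n → ℂ) ⬝ᵥ Pi.single i c = 0 := by simp [hij.ne]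
    refine ⟨isNilpotent_sub_one_of_eq_one_add_vecMulVec σ hdot hg', 2 ^ (i - j : ℕ),
      Nat.one_lt_two_pow (by lia), ?_⟩
    have hpow : diagGL t * g = g ^ 2 ^ (i - j : ℕ) * diagGL t := by
      refine diagGL_mul_eq_of_transvection t hg (d := 2 ^ (i - j : ℕ) * c) ?_ ?_
      · rw [Units.val_pow_eq_pow_val, pow_eq_one_add_vecMulVec hdot hg', ← Pi.single_smul,
          transvection_eq_one_add_vecMulVec]
        simp
      · have : (2 : ℂ) ^ (i : ℕ) = 2 ^ (i - j : ℕ) * 2 ^ (j : ℕ) := by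
          rw [← pow_add, Nat.sub_add_cancel (Fin.le_def.1 hij.le)]
        simp only [t, Units.val_pow_eq_pow_val, Units.val_mk0, this]
        ring
    rw [σ.asGroupHom_apply, ← map_mul, hpow, map_mul, map_pow]
  refine ⟨x, hx, fun u hu ↦ ?_⟩
  induction hu using Subgroup.closure_induction with
  | mem u hu => exact hfix _ ⟨u, hu, rfl⟩
  | one => simp
  | mul u u' _ _ h h' => simp [h, h']
  | inv u _ h => simpa using (congrArg (σ u⁻¹) h).symm

end LowerUnipotent

section BigCell

variable {n : ℕ} {V : Type*} [AddCommGroup V] [Module ℂ V]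

/-- A highest weight vector of weight `ω`; unlike in `IsHWRep`, it may be zero. -/
structure IsHighestWeightVector (σ : Representation ℂ (GL (Fin n) ℂ) V) (ω : Fin n → ℤ) (v : V) :
    Prop where
  apply_isUnitri : ∀ g : GL (Fin n) ℂ, IsUnitri g → σ g v = v
  apply_diagGL : ∀ t : Fin n → ℂˣ, σ (diagGL t) v = (∏ i, (t i : ℂ) ^ ω i) • v

/-- The subspace spanned by the orbit of `v` under the lower unipotent group. -/
def lowerOrbitSpan (σ : Representation ℂ (GL (Fin n) ℂ) V) (v : V) : Submodule ℂ V :=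
  Submodule.span ℂ ((fun u ↦ σ u v) '' (lowerUnipotent n : Set (GL (Fin n) ℂ)))

variable {σ : Representation ℂ (GL (Fin n) ℂ) V} {ω : Fin n → ℤ} {v w : V}

lemma apply_mem_lowerOrbitSpan {u : GL (Fin n) ℂ} (hu : u ∈ lowerUnipotent n) :
    σ u v ∈ lowerOrbitSpan σ v :=
  Submodule.subset_span ⟨u, hu, rfl⟩

lemma self_mem_lowerOrbitSpan : v ∈ lowerOrbitSpan σ v := by
  simpa using apply_mem_lowerOrbitSpan (σ := σ) (v := v) (one_mem (lowerUnipotent n))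

lemma map_mem_lowerOrbitSpan {g : GL (Fin n) ℂ}
    (h : ∀ u ∈ lowerUnipotent n, σ g (σ u v) ∈ lowerOrbitSpan σ v)
    (hw : w ∈ lowerOrbitSpan σ v) : σ g w ∈ lowerOrbitSpan σ v := by
  refine (Submodule.span_le (p := (lowerOrbitSpan σ v).comap (σ g))).2 ?_ hw
  rintro _ ⟨u, hu, rfl⟩
  exact h u hu

lemma lowerUnipotent_apply_mem_lowerOrbitSpan {u : GL (Fin n) ℂ} (hu : u ∈ lowerUnipotent n)
    (hw : w ∈ lowerOrbitSpan σ v) : σ u w ∈ lowerOrbitSpan σ v := by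
  refine map_mem_lowerOrbitSpan (fun u' hu' ↦ ?_) hw
  rw [← Module.End.mul_apply, ← map_mul]
  exact apply_mem_lowerOrbitSpan (mul_mem hu hu')

namespace IsHighestWeightVector

lemma apply_diagGL_apply (hv : IsHighestWeightVector σ ω v) (t : Fin n → ℂˣ) (u : GL (Fin n) ℂ) :
    σ (diagGL t) (σ u v) = (∏ i, (t i : ℂ) ^ ω i) • σ (diagGL t * u * (diagGL t)⁻¹) v := by
  rw [← map_smul, ← hv.apply_diagGL t]
  simp only [← Module.End.mul_apply, ← map_mul, inv_mul_cancel_right]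

lemma diagGL_apply_mem_lowerOrbitSpan (hv : IsHighestWeightVector σ ω v) (t : Fin n → ℂˣ)
    (hw : w ∈ lowerOrbitSpan σ v) : σ (diagGL t) w ∈ lowerOrbitSpan σ v := by
  refine map_mem_lowerOrbitSpan (fun u hu ↦ ?_) hw
  rw [hv.apply_diagGL_apply]
  exact Submodule.smul_mem _ _
    (apply_mem_lowerOrbitSpan (diagGL_mul_mul_inv_mem_lowerUnipotent t hu))

end IsHighestWeightVector

lemma isUnitri_of_eq_one_add_vecMulVec {g : GL (Fin n) ℂ} {a b : Fin n → ℂ}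
    (hab : ∀ i j, a i ≠ 0 → b j ≠ 0 → i < j)
    (hg : (g : Matrix (Fin n) (Fin n) ℂ) = 1 + vecMulVec a b) : IsUnitri g := by
  have hzero (i j : Fin n) (hij : j ≤ i) : a i * b j = 0 := by
    by_contra h
    exact hij.not_gt (hab i j (left_ne_zero_of_mul h) (right_ne_zero_of_mul h))
  constructor
  · intro i
    simp [hg, vecMulVec_apply, hzero]
  · intro i j hij
    simp [hg, vecMulVec_apply, hzero i j hij.le, one_apply_ne hij.ne']

lemma coe_diagGL_mulSingle (c : Fin n) (d : ℂˣ) :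
    (diagGL (Pi.mulSingle c d) : Matrix (Fin n) (Fin n) ℂ) =
      1 + vecMulVec (Pi.single c (d - 1 : ℂ)) (Pi.single c 1) := by
  ext i j
  rcases eq_or_ne i j with rfl | hij
  · rcases eq_or_ne i c with rfl | hi <;> simp [vecMulVec_apply, *]
  · rcases eq_or_ne i c with rfl | hi <;> simp [vecMulVec_apply, *, hij.symm]

lemma one_add_vecMulVec_add_smul {ι K : Type*} [Fintype ι] [DecidableEq ι] [Field K]
    {P Q e f : ι → K} (hP : f ⬝ᵥ P = 0) (hQ : Q ⬝ᵥ e = 0) (hef : f ⬝ᵥ e = 1) {x y d : K}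
    (hd : d ≠ 0) (hxy : d = 1 + x * y) :
    1 + vecMulVec (d • P + x • e) (Q + y • f) =
      (1 + vecMulVec (y • P) f) * (1 + vecMulVec ((d - 1) • e) f) *
        (1 + vecMulVec P Q) * (1 + vecMulVec ((x / d) • e) Q) := by
  simp only [mul_add, add_mul, mul_one, one_mul, smul_vecMulVec, vecMulVec_smul, add_vecMulVec,
    vecMulVec_add, smul_mul_assoc, mul_smul_comm, vecMulVec_mul_vecMulVec, hP, hQ, hef, zero_smul,
    one_smul, vecMulVec_zero, smul_zero, add_zero]
  match_scalars <;> field_simp <;> (try rw [hxy]) <;> ring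

lemma lt_of_update_apply_ne_zero {ι K : Type*} [LinearOrder ι] [Zero K] {p : ι → K} {c i : ι}
    (hp : ∀ j < c, p j = 0) (hi : Function.update p c 0 i ≠ 0) : c < i := by
  by_contra! hle
  rcases hle.eq_or_lt with rfl | hlt
  · simp at hi
  · simp [hlt.ne, hp i hlt] at hi

lemma exists_eq_mul_diagGL_mul_rankOneGL_mul {g : GL (Fin n) ℂ} {p q : Fin n → ℂ}
    (hg : (g : Matrix (Fin n) (Fin n) ℂ) = 1 + vecMulVec p q) {c : Fin n}
    (hp : ∀ i < c, p i = 0) (hq : ∀ i < c, q i = 0) {d : ℂˣ} (hd : (d : ℂ) = 1 + p c * q c)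
    (h : 1 + Function.update q c 0 ⬝ᵥ Function.update ((d : ℂ)⁻¹ • p) c 0 ≠ 0) :
    ∃ L ∈ lowerUnipotent n, ∃ U, IsUnitri U ∧
      g = L * diagGL (Pi.mulSingle c d) *
        rankOneGL (Function.update ((d : ℂ)⁻¹ • p) c 0) (Function.update q c 0) h * U := by
  set P := Function.update ((d : ℂ)⁻¹ • p) c 0
  set Q := Function.update q c 0
  let e : Fin n → ℂ := Pi.single c 1
  have hpP : (d : ℂ) • P + p c • e = p := by
    ext l; by_cases hl : l = c <;> simp [P, e, hl]
  have hqQ : Q + q c • e = q := by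
    ext l; by_cases hl : l = c <;> simp [Q, e, hl]
  have he (i : Fin n) (r : ℂ) (hi : (r • e) i ≠ 0) : i = c := by
    by_contra hne
    simp [e, hne] at hi
  refine ⟨rankOneGL (q c • P) e (by simp [e, P]), ?_, rankOneGL ((p c / d : ℂ) • e) Q
    (by simp [e, Q]), ?_, Units.ext ?_⟩
  · refine mem_lowerUnipotent_of_eq_one_add_vecMulVec (fun i j hi hj ↦ ?_) rfl
    rw [he j 1 (by simpa using hj)]
    exact lt_of_update_apply_ne_zero (by simpa using hp) (right_ne_zero_of_mul hi)
  · refine isUnitri_of_eq_one_add_vecMulVec (fun i j hi hj ↦ ?_) rfl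
    rw [he i _ hi]
    exact lt_of_update_apply_ne_zero hq hj
  · have hdecomp := one_add_vecMulVec_add_smul (P := P) (Q := Q) (e := e) (f := e) (x := p c)
      (y := q c) (by simp [e, P]) (by simp [e, Q]) (by simp [e]) d.ne_zero hd
    rw [hpP, hqQ] at hdecomp
    rw [hg, hdecomp, Units.val_mul, Units.val_mul, Units.val_mul, coe_diagGL_mulSingle]
    simp [e, P, Q, ← Pi.single_smul]

lemma one_add_sum_update_mul_update_ne_zero {ι K : Type*} [DecidableEq ι] [Field K] {p q : ι → K}
    (h : ∀ r : Finset ι, 1 + ∑ l ∈ r, p l * q l ≠ 0) (c : ι) (r : Finset ι) :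
    1 + ∑ l ∈ r, Function.update ((1 + p c * q c)⁻¹ • p) c 0 l * Function.update q c 0 l ≠ 0 := by
  set d := 1 + p c * q c with hd
  have hd0 : d ≠ 0 := by simpa using h {c}
  have hr := h (insert c (r.erase c))
  rw [Finset.sum_insert (Finset.notMem_erase c r), ← add_assoc, ← hd] at hr
  have hterm (l : ι) (hl : l ∈ r.erase c) :
      Function.update (d⁻¹ • p) c 0 l * Function.update q c 0 l = d⁻¹ * (p l * q l) := by
    simp [Finset.ne_of_mem_erase hl, mul_assoc]
  rw [← Finset.sum_erase r (a := c) (by simp), Finset.sum_congr rfl hterm, ← Finset.mul_sum]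
  refine fun h0 ↦ hr ?_
  field_simp at h0
  simpa using h0

namespace IsHighestWeightVector

lemma apply_mem_lowerOrbitSpan_of_eq_one_add_vecMulVec (hv : IsHighestWeightVector σ ω v)
    (s : Finset (Fin n)) {p q : Fin n → ℂ} (hp : ∀ i ∉ s, p i = 0) (hq : ∀ i ∉ s, q i = 0)
    (hpq : ∀ r : Finset (Fin n), 1 + ∑ l ∈ r, p l * q l ≠ 0) {g : GL (Fin n) ℂ}
    (hg : (g : Matrix (Fin n) (Fin n) ℂ) = 1 + vecMulVec p q) : σ g v ∈ lowerOrbitSpan σ v := by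
  induction s using Finset.induction_on_min generalizing p q g with
  | empty =>
    obtain rfl : p = 0 := funext fun i ↦ hp i (Finset.notMem_empty i)
    obtain rfl : g = 1 := Units.ext (by simpa using hg)
    simpa using self_mem_lowerOrbitSpan
  | insert c s hc ih =>
    obtain ⟨d, hd⟩ : ∃ d : ℂˣ, (d : ℂ) = 1 + p c * q c := ⟨.mk0 _ (by simpa using hpq {c}), rfl⟩
    have hPQ := one_add_sum_update_mul_update_ne_zero hpq c
    rw [← hd] at hPQ
    have hlt (i : Fin n) (hi : i < c) : i ∉ insert c s := by
      simpa [hi.ne] using fun his ↦ (hc i his).not_gt hi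
    obtain ⟨L, hL, U, hU, rfl⟩ := exists_eq_mul_diagGL_mul_rankOneGL_mul hg
      (fun i hi ↦ hp i (hlt i hi)) (fun i hi ↦ hq i (hlt i hi)) hd
      (by simpa only [dotProduct, mul_comm] using hPQ Finset.univ)
    simp only [map_mul, Module.End.mul_apply, hv.apply_isUnitri U hU]
    refine lowerUnipotent_apply_mem_lowerOrbitSpan hL (hv.diagGL_apply_mem_lowerOrbitSpan _
      (ih (fun i hi ↦ ?_) (fun i hi ↦ ?_) hPQ rfl))
    · by_cases hic : i = c <;> simp [hic, hp i, hi]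
    · by_cases hic : i = c <;> simp [hic, hq i, hi]

-- For all but finitely many `N` the conjugate `u⁻¹ * g ^ (N + 1) * u` lies in the big cell; the
-- remaining exponents, in particular `N = 0`, follow by polynomial dependence on `N`.
lemma transvection_apply_mem_lowerOrbitSpan [FiniteDimensional ℂ V]
    (hv : IsHighestWeightVector σ ω v) {g : GL (Fin n) ℂ} {a b : Fin n → ℂ} (hab : b ⬝ᵥ a = 0)
    (hg : (g : Matrix (Fin n) (Fin n) ℂ) = 1 + vecMulVec a b) (hw : w ∈ lowerOrbitSpan σ v) :
    σ g w ∈ lowerOrbitSpan σ v := by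
  refine map_mem_lowerOrbitSpan (fun u hu ↦ ?_) hw
  refine mem_of_infinite_setOf_pow_apply_mem
    (isNilpotent_sub_one_of_eq_one_add_vecMulVec σ hab hg) ?_
  set p := ((u⁻¹ : GL (Fin n) ℂ) : Matrix (Fin n) (Fin n) ℂ) *ᵥ a
  set q := b ᵥ* (u : Matrix (Fin n) (Fin n) ℂ)
  have hfin : (⋃ r : Finset (Fin n),
      {N : ℕ | 1 + ∑ l ∈ r, (((N + 1 : ℕ) : ℂ) • p) l * q l = 0}).Finite := by
    refine Set.finite_iUnion fun r ↦ Set.Subsingleton.finite fun N hN N' hN' ↦ ?_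
    simp only [Set.mem_ofPred_eq, Pi.smul_apply, smul_eq_mul, mul_assoc, ← Finset.mul_sum] at hN hN'
    have hsum : ∑ l ∈ r, p l * q l ≠ 0 := fun h0 ↦ by simp [h0] at hN
    have hcast := mul_right_cancel₀ hsum (add_left_cancel (hN.trans hN'.symm))
    simpa using hcast
  refine hfin.infinite_compl.mono fun N hN ↦ ?_
  simp only [Set.mem_compl_iff, Set.mem_iUnion, Set.mem_ofPred_eq, not_exists] at hN
  have hconj : ((u⁻¹ * g ^ (N + 1) * u : GL (Fin n) ℂ) : Matrix (Fin n) (Fin n) ℂ) =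
      1 + vecMulVec (((N + 1 : ℕ) : ℂ) • p) q := by
    rw [Units.val_mul, Units.val_mul, Units.val_pow_eq_pow_val, pow_eq_one_add_vecMulVec hab hg,
      mul_add, add_mul, mul_one, ← Units.val_mul, inv_mul_cancel, mul_vecMulVec, vecMulVec_mul,
      mulVec_smul, Units.val_one]
  have happly : (σ g ^ N) (σ g (σ u v)) = σ u (σ (u⁻¹ * g ^ (N + 1) * u) v) := by
    simp only [← map_pow, ← Module.End.mul_apply, ← map_mul, pow_succ, mul_assoc,
      mul_inv_cancel_left]
  rw [Set.mem_ofPred_eq, happly]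
  exact lowerUnipotent_apply_mem_lowerOrbitSpan hu
    (hv.apply_mem_lowerOrbitSpan_of_eq_one_add_vecMulVec Finset.univ (by simp) (by simp) hN hconj)

lemma apply_mem_lowerOrbitSpan [FiniteDimensional ℂ V] (hv : IsHighestWeightVector σ ω v)
    (g : GL (Fin n) ℂ) (hw : w ∈ lowerOrbitSpan σ v) : σ g w ∈ lowerOrbitSpan σ v := by
  let P (M : Matrix (Fin n) (Fin n) ℂ) : Prop := ∀ g : GL (Fin n) ℂ, ↑g = M →
    ∀ w ∈ lowerOrbitSpan σ v, σ g w ∈ lowerOrbitSpan σ v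
  suffices h : P g from h g rfl w hw
  refine diagonal_transvection_induction_of_det_ne_zero P g g.det_ne_zero ?_ ?_ ?_
  · intro d hd g hg w hw
    have hd' (i : Fin n) : d i ≠ 0 := by
      rw [det_diagonal, Finset.prod_ne_zero_iff] at hd
      exact hd i (Finset.mem_univ i)
    obtain rfl : g = diagGL fun i ↦ Units.mk0 (d i) (hd' i) := Units.ext hg
    exact hv.diagGL_apply_mem_lowerOrbitSpan _ hw
  · intro t g hg w hw
    exact hv.transvection_apply_mem_lowerOrbitSpan (by simp [t.hij.symm])
      (hg.trans (transvection_eq_one_add_vecMulVec _ _ _)) hw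
  · intro A B hA hB ihA ihB g hg w hw
    obtain rfl : g = .mkOfDetNeZero A hA * .mkOfDetNeZero B hB := Units.ext hg
    rw [map_mul]
    exact ihA _ rfl _ (ihB _ rfl _ hw)

end IsHighestWeightVector

/-- A lowest weight vector of the dual representation, of weight `-ω`: the linear functional
dual to a highest weight vector of weight `ω`. -/
structure IsLowestWeightFunctional (σ : Representation ℂ (GL (Fin n) ℂ) V) (ω : Fin n → ℤ)
    (x : Module.Dual ℂ V) : Prop where
  apply_lowerUnipotent : ∀ u ∈ lowerUnipotent n, ∀ w, x (σ u w) = x w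
  apply_diagGL : ∀ (t : Fin n → ℂˣ) (w : V), x (σ (diagGL t) w) = (∏ i, (t i : ℂ) ^ ω i) * x w

lemma IsHighestWeightVector.isLowestWeightFunctional (hv : IsHighestWeightVector σ ω v)
    (hspan : lowerOrbitSpan σ v = ⊤) {x : Module.Dual ℂ V}
    (hx : ∀ u ∈ lowerUnipotent n, ∀ w, x (σ u w) = x w) : IsLowestWeightFunctional σ ω x where
  apply_lowerUnipotent := hx
  apply_diagGL t w := by
    refine LinearMap.congr_fun (f := x ∘ₗ σ (diagGL t)) (g := (∏ i, (t i : ℂ) ^ ω i) • x)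
      (LinearMap.ext_on hspan ?_) w
    rintro _ ⟨u, hu, rfl⟩
    rw [LinearMap.comp_apply, LinearMap.smul_apply, hv.apply_diagGL_apply, map_smul,
      hx _ (diagGL_mul_mul_inv_mem_lowerUnipotent t hu), hx u hu]

namespace IsLowestWeightFunctional

lemma apply_eq_zpow_mul (hx : IsLowestWeightFunctional σ ω x) {g g' : GL (Fin n) ℂ} {j : Fin n}
    {a : Fin n → ℂ} (ha : 1 + a j ≠ 0)
    (hg : (g : Matrix (Fin n) (Fin n) ℂ) = 1 + vecMulVec a (Pi.single j 1))
    (hg' : (g' : Matrix (Fin n) (Fin n) ℂ) =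
      1 + vecMulVec (fun i ↦ if i < j then a i else 0) (Pi.single j 1)) (w : V) :
    x (σ g w) = (1 + a j) ^ ω j * x (σ g' w) := by
  let d : ℂˣ := Units.mk0 (1 + a j) ha
  let l : Fin n → ℂ := fun i ↦ if j < i then (1 + a j)⁻¹ * a i else 0
  let L : GL (Fin n) ℂ := rankOneGL l (Pi.single j 1) (by simp [l])
  have hL : L ∈ lowerUnipotent n := by
    refine mem_lowerUnipotent_of_eq_one_add_vecMulVec (fun i i' hi hi' ↦ ?_) rfl
    obtain rfl : i' = j := by
      by_contra hne
      simp [hne] at hi'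
    by_contra hlt
    simp [l, hlt] at hi
  have hfactor : g = L * diagGL (Pi.mulSingle j d) * g' := by
    have ha' : a = (fun i ↦ if i < j then a i else 0) + a j • Pi.single j 1 + (1 + a j) • l := by
      ext i
      rcases lt_trichotomy i j with h | rfl | h
      · simp [l, h, h.ne, h.not_gt]
      · simp [l]
      · simp [l, h, h.ne', h.not_gt, ha]
    refine Units.ext ?_
    rw [hg, Units.val_mul, Units.val_mul, hg', coe_diagGL_mulSingle, coe_rankOneGL]
    conv_lhs => rw [ha']
    set up : Fin n → ℂ := fun i ↦ if i < j then a i else 0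
    have hup : Pi.single j 1 ⬝ᵥ up = 0 := by simp [up]
    have hsingle : Pi.single j (d - 1 : ℂ) = a j • Pi.single j 1 := by simp [d, ← Pi.single_smul]
    have hjj : (Pi.single j 1 : Fin n → ℂ) ⬝ᵥ Pi.single j 1 = 1 := by simp
    simp only [hsingle, mul_add, add_mul, mul_one, one_mul, add_vecMulVec, smul_vecMulVec,
      smul_mul_assoc, mul_smul_comm, vecMulVec_mul_vecMulVec, hup, hjj, zero_smul, one_smul,
      vecMulVec_zero, smul_zero, add_zero]
    module
  rw [hfactor]
  simp only [map_mul, Module.End.mul_apply]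
  rw [hx.apply_lowerUnipotent L hL, hx.apply_diagGL, Finset.prod_eq_single_of_mem j]
  · simp [d]
  · simp
  · intro i _ hij
    simp [hij]

end IsLowestWeightFunctional

lemma IsHWRep.exists_isLowestWeightFunctional {ρ : GL (Fin n) ℂ →* (V →ₗ[ℂ] V)ˣ}
    (hρ : IsHWRep n ρ ω) :
    ∃ x, x ≠ 0 ∧ IsLowestWeightFunctional ((Units.coeHom _).comp ρ) ω x := by
  let σ : Representation ℂ (GL (Fin n) ℂ) V := (Units.coeHom _).comp ρ
  have := hρ.finite
  obtain ⟨v, hv0, hunitri, hdiag⟩ := hρ.exists_hw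
  have := nontrivial_of_ne v 0 hv0
  have hv : IsHighestWeightVector σ ω v := ⟨hunitri, hdiag⟩
  have hspan : lowerOrbitSpan σ v = ⊤ :=
    (hρ.irred _ fun g w ↦ hv.apply_mem_lowerOrbitSpan g).resolve_left fun hbot ↦
      hv0 ((Submodule.mem_bot ℂ).1 (hbot ▸ self_mem_lowerOrbitSpan))
  obtain ⟨x, hx0, hx⟩ := exists_ne_zero_forall_lowerUnipotent_apply_eq_self σ.dual
  refine ⟨x, hx0, hv.isLowestWeightFunctional hspan fun u hu w ↦ ?_⟩
  simpa [Module.Dual.transpose_apply] using LinearMap.congr_fun (hx u⁻¹ (inv_mem hu)) w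

end BigCell

section InvariantVector

lemma exists_mem_add_vecMul_eq_zero {ι κ K : Type*} [Fintype ι] [LinearOrder ι] [Fintype κ]
    [Field K] (A : Matrix ι κ K) {s : Finset ι} (hs : Fintype.card κ < s.card) :
    ∃ j ∈ s, ∃ l : ι → K, (∀ i, l i ≠ 0 → i < j) ∧ A.row j + l ᵥ* A = 0 := by
  have hdep : ¬ LinearIndepOn K A.row s := fun hA ↦ by
    refine hs.not_ge ?_
    simpa [Module.finrank_fintype_fun_eq_card] using LinearIndependent.fintype_card_le_finrank hA
  classical
  rw [linearIndepOn_finset_iff] at hdep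
  push Not at hdep
  obtain ⟨c, hsum, i, his, hi⟩ := hdep
  let t : Finset ι := {i ∈ s | c i ≠ 0}
  have ht : t.Nonempty := ⟨i, by simp [t, his, hi]⟩
  obtain ⟨j, hj⟩ : ∃ j, j = t.max' ht := ⟨_, rfl⟩
  have hjt : j ∈ t := hj ▸ t.max'_mem ht
  obtain ⟨hjs, hj0⟩ := Finset.mem_filter.1 hjt
  refine ⟨j, hjs, fun i ↦ if i ∈ t.erase j then (c j)⁻¹ * c i else 0, fun i hi ↦ ?_, ?_⟩
  · have hit : i ∈ t.erase j := by
      by_contra hit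
      simp [hit] at hi
    subst hj
    exact t.lt_max'_of_mem_erase_max' ht hit
  · have hsum' : c j • A.row j + ∑ i ∈ t.erase j, c i • A.row i = 0 := by
      rw [Finset.add_sum_erase t (fun i ↦ c i • A.row i) hjt, ← hsum]
      exact Finset.sum_filter_of_ne fun i _ hi ↦ left_ne_zero_of_smul hi
    simp only [vecMul_eq_sum, ite_smul, zero_smul, Finset.sum_ite_mem, Finset.univ_inter, mul_smul,
      ← Finset.smul_sum]
    simpa [hj0, row_def] using congrArg ((c j)⁻¹ • ·) hsum'

variable {m k : ℕ} {V : Type*} [AddCommGroup V] [Module ℂ V]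
  {σ : Representation ℂ (GL (Fin (m + k)) ℂ) V} {ω : Fin (m + k) → ℤ} {x : Module.Dual ℂ V} {v : V}

lemma embBR_rankOneGL (a b : Fin k → ℂ) (h : 1 + b ⬝ᵥ a ≠ 0) :
    (embBR m k (rankOneGL a b h) : Matrix (Fin (m + k)) (Fin (m + k)) ℂ) =
      1 + vecMulVec (Fin.append 0 a) (Fin.append 0 b) := by
  ext i j
  refine i.addCases (fun i ↦ ?_) fun i ↦ ?_ <;> refine j.addCases (fun j ↦ ?_) fun j ↦ ?_ <;>
  simp [embBR, blockBRHom, vecMulVec_apply, one_apply, Fin.ext_iff] <;> lia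

lemma append_zero_smul (c : ℂ) (a : Fin k → ℂ) :
    Fin.append (0 : Fin m → ℂ) (c • a) = c • Fin.append 0 a :=
  funext fun i ↦ i.addCases (by simp) (by simp)

lemma mul_embBR_rankOneGL {g : GL (Fin (m + k)) ℂ} {j : Fin (m + k)} {a r : Fin k → ℂ}
    (hr : g.1.row j = Fin.append 0 r) (h : 1 + r ⬝ᵥ a ≠ 0) :
    (g * embBR m k (rankOneGL a r h) : Matrix (Fin (m + k)) (Fin (m + k)) ℂ) =
      (1 + vecMulVec (g.1 *ᵥ Fin.append 0 a) (Pi.single j 1)) * g.1 := by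
  rw [embBR_rankOneGL, mul_add, add_mul, mul_one, one_mul, mul_vecMulVec, vecMulVec_mul,
    single_one_vecMul, hr]

lemma exists_row_eq_append_of_row_eq_zero {g : GL (Fin (m + k)) ℂ} {j : Fin (m + k)}
    (hg : ∀ i : Fin m, g j (Fin.castAdd k i) = 0) :
    ∃ r a : Fin k → ℂ, g.1.row j = Fin.append 0 r ∧ r ⬝ᵥ a = 1 := by
  obtain ⟨r, hr⟩ : ∃ r : Fin k → ℂ, g.1.row j = Fin.append 0 r :=
    ⟨fun i ↦ g j (Fin.natAdd m i), funext fun i ↦ i.addCases (by simp [hg]) (by simp)⟩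
  obtain ⟨i₀, hi₀⟩ : ∃ i₀, r i₀ ≠ 0 := by
    by_contra! h0
    obtain rfl : r = 0 := funext h0
    refine g.det_ne_zero (det_eq_zero_of_row_eq_zero j fun i ↦ ?_)
    exact (congrFun hr i).trans (i.addCases (by simp) (by simp))
  exact ⟨r, Pi.single i₀ (r i₀)⁻¹, hr, by simp [hi₀]⟩

namespace IsLowestWeightFunctional

-- `N ↦ x (f ^ N • g • v)` is polynomial, but invariance of `v` under `GL_k` forces it to equal
-- `(N + 1) ^ (-ω j) * x (g • v)`.
lemma apply_eq_zero_of_row_eq_zero [FiniteDimensional ℂ V] (hx : IsLowestWeightFunctional σ ω x)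
    (hv : ∀ h, σ (embBR m k h) v = v) {j : Fin (m + k)} (hj : 0 < ω j) {g : GL (Fin (m + k)) ℂ}
    (hg : ∀ i : Fin m, g j (Fin.castAdd k i) = 0) : x (σ g v) = 0 := by
  obtain ⟨r, a, hr, hra⟩ := exists_row_eq_append_of_row_eq_zero hg
  let η : Fin (m + k) → ℂ := g.1 *ᵥ Fin.append 0 a
  have hη : η j = 1 := by
    rw [← hra]
    change g.1.row j ⬝ᵥ Fin.append 0 a = _
    rw [hr]
    simp [dotProduct, Fin.sum_univ_add]
  let e : Fin (m + k) → ℂ := Pi.single j 1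
  let f : GL (Fin (m + k)) ℂ := rankOneGL (fun i ↦ if i < j then η i else 0) e (by simp [e])
  have hf : IsNilpotent (σ f - 1) :=
    isNilpotent_sub_one_of_eq_one_add_vecMulVec σ (by simp [e]) rfl
  refine eq_zero_of_succ_pow_mul_eq hf (ξ := x) (v := σ g v) (q := (ω j).toNat) (by lia) fun N ↦ ?_
  have hN : 1 + (N : ℂ) ≠ 0 := add_comm (1 : ℂ) N ▸ Nat.cast_add_one_ne_zero N
  let F : GL (Fin (m + k)) ℂ := rankOneGL ((N : ℂ) • η) e (by simpa [e, hη] using hN)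
  have hFg : σ F (σ g v) = σ g v := by
    have hcomm : F * g = g * embBR m k (rankOneGL ((N : ℂ) • a) r (by simpa [hra] using hN)) :=
      Units.ext <| by
      rw [Units.val_mul, Units.val_mul, mul_embBR_rankOneGL hr, append_zero_smul, mulVec_smul,
        coe_rankOneGL]
    rw [← Module.End.mul_apply, ← map_mul, hcomm, map_mul, Module.End.mul_apply, hv]
  have hfN : ((f ^ N : GL (Fin (m + k)) ℂ) : Matrix (Fin (m + k)) (Fin (m + k)) ℂ) =
      1 + vecMulVec (fun i ↦ if i < j then ((N : ℂ) • η) i else 0) e := by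
    rw [Units.val_pow_eq_pow_val, pow_eq_one_add_vecMulVec (by simp [e]) (coe_rankOneGL _ _ _)]
    congr 2
    ext i
    simp
  have hF := hx.apply_eq_zpow_mul (g := F) (by simpa [hη] using hN) rfl hfN (σ g v)
  rw [hFg] at hF
  rw [hF, map_pow, ← zpow_natCast, Int.toNat_of_nonneg hj.le]
  simp [hη, add_comm]

lemma apply_eq_zero_of_lt_lenPos [FiniteDimensional ℂ V] (hx : IsLowestWeightFunctional σ ω x)
    (hv : ∀ h, σ (embBR m k h) v = v) (hω : m < lenPos ω) (g : GL (Fin (m + k)) ℂ) :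
    x (σ g v) = 0 := by
  obtain ⟨j, hj, l, hl, hrow⟩ := exists_mem_add_vecMul_eq_zero
    ((g : Matrix (Fin (m + k)) (Fin (m + k)) ℂ).submatrix id (Fin.castAdd k))
    (by simpa [lenPos] using hω)
  have hlj : l j = 0 := by_contra fun h ↦ (hl j h).false
  let u : GL (Fin (m + k)) ℂ := rankOneGL (Pi.single j 1) l (by simp [hlj])
  have hu : u ∈ lowerUnipotent (m + k) := by
    refine mem_lowerUnipotent_of_eq_one_add_vecMulVec (fun i i' hi hi' ↦ ?_) rfl
    obtain rfl : i = j := by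
      by_contra hne
      simp [hne] at hi
    exact hl i' hi'
  rw [← hx.apply_lowerUnipotent u hu, ← Module.End.mul_apply, ← map_mul]
  refine hx.apply_eq_zero_of_row_eq_zero hv (Finset.mem_filter.1 hj).2 fun i ↦ ?_
  simpa [u, add_mul, vecMulVec_mul, vecMulVec_apply, vecMul, dotProduct] using congrFun hrow i

end IsLowestWeightFunctional

lemma IsHWRep.lenPos_le {ρ : GL (Fin (m + k)) ℂ →* (V →ₗ[ℂ] V)ˣ} (hρ : IsHWRep (m + k) ρ ω)
    (hv : v ≠ 0) (hfix : ∀ h, (ρ (embBR m k h) : V →ₗ[ℂ] V) v = v) : lenPos ω ≤ m := by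
  by_contra! hω
  have := hρ.finite
  obtain ⟨x, hx0, hx⟩ := hρ.exists_isLowestWeightFunctional
  let W : Submodule ℂ V := ⨅ g, x.ker.comap (ρ g : V →ₗ[ℂ] V)
  have hW (w : V) : w ∈ W ↔ ∀ g, x ((ρ g : V →ₗ[ℂ] V) w) = 0 := by simp [W]
  have hvW : v ∈ W := (hW v).2 (hx.apply_eq_zero_of_lt_lenPos hfix hω)
  rcases hρ.irred W fun g w hw ↦ (hW _).2 fun g' ↦ by simpa using (hW w).1 hw (g' * g) with
    hbot | htop
  · exact hv ((Submodule.mem_bot ℂ).1 (hbot ▸ hvW))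
  · refine hx0 (LinearMap.ext fun w ↦ ?_)
    simpa using (hW w).1 (htop ▸ Submodule.mem_top) 1

end InvariantVector

section InvTranspose

/-- The automorphism `g ↦ (g⁻¹)ᵀ`; composing with it turns a representation into a model of its
dual. -/
def invTranspose {ι R : Type*} [Fintype ι] [DecidableEq ι] [CommRing R] : GL ι R →* GL ι R where
  toFun g := ⟨g⁻¹.1ᵀ, g.1ᵀ, by rw [← transpose_mul]; simp, by rw [← transpose_mul]; simp⟩
  map_one' := Units.ext (by simp)
  map_mul' g h := Units.ext (by simp)

@[simp]
lemma inv_coe_invTranspose {ι R : Type*} [Fintype ι] [DecidableEq ι] [CommRing R] (g : GL ι R) :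
    (invTranspose g : Matrix ι ι R)⁻¹ = (g : Matrix ι ι R)ᵀ := by
  rw [← coe_units_inv]
  rfl

lemma invTranspose_invTranspose {ι R : Type*} [Fintype ι] [DecidableEq ι] [CommRing R]
    (g : GL ι R) : invTranspose (invTranspose g) = g := Units.ext rfl

lemma invTranspose_embBR {m k : ℕ} (h : GL (Fin k) ℂ) :
    invTranspose (embBR m k h) = embBR m k (invTranspose h) := by
  refine inv_injective (Units.ext ?_)
  rw [coe_units_inv, inv_coe_invTranspose, ← map_inv]
  simp [embBR, blockBRHom, fromBlocks_transpose]

variable {n : ℕ}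

/-- The longest Weyl group element, as a permutation matrix. -/
def revGL (n : ℕ) : GL (Fin n) ℂ :=
  permMatrixHom.toHomUnits Fin.revPerm

lemma revGL_inv_mul_mul_apply (g : GL (Fin n) ℂ) (i j : Fin n) :
    ((revGL n)⁻¹ * g * revGL n : GL (Fin n) ℂ) i j = g i.rev j.rev := by
  have hrev : (revGL n)⁻¹ = revGL n := by
    rw [revGL, ← map_inv]
    rfl
  have hcoe : (revGL n : Matrix (Fin n) (Fin n) ℂ) = Fin.revPerm.toPEquiv.toMatrix := rfl
  rw [hrev, Units.val_mul, Units.val_mul, hcoe, PEquiv.toMatrix_toPEquiv_mul,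
    PEquiv.mul_toMatrix_toPEquiv]
  simp

lemma IsHWRep.comp_invTranspose {V : Type*} [AddCommGroup V] [Module ℂ V]
    {ρ : GL (Fin n) ℂ →* (V →ₗ[ℂ] V)ˣ} {ω : Fin n → ℤ} (hρ : IsHWRep n ρ ω) :
    IsHWRep n (ρ.comp invTranspose) (fun i ↦ -ω i.rev) where
  finite := hρ.finite
  dominant i j hij := neg_le_neg (hρ.dominant (Fin.rev_le_rev.2 hij))
  irred W hW := hρ.irred W fun g ↦ by
    simpa [invTranspose_invTranspose] using hW (invTranspose g)
  exists_hw := by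
    obtain ⟨v, hv, hunitri, hdiag⟩ := hρ.exists_hw
    have hconj (g h : GL (Fin n) ℂ) (hgh : (revGL n)⁻¹ * (invTranspose g)⁻¹ * revGL n = h⁻¹) :
        (ρ (invTranspose g) : V →ₗ[ℂ] V) ((ρ (revGL n) : V →ₗ[ℂ] V) v) =
          (ρ (revGL n) : V →ₗ[ℂ] V) ((ρ h : V →ₗ[ℂ] V) v) := by
      have hmul : invTranspose g * revGL n = revGL n * h := by
        rw [← _root_.inv_inj, _root_.mul_inv_rev, _root_.mul_inv_rev, ← hgh, mul_inv_cancel_right]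
      simp only [← Module.End.mul_apply, ← Units.val_mul, ← map_mul, hmul]
    refine ⟨(ρ (revGL n) : V →ₗ[ℂ] V) v, ?_, fun g hg ↦ ?_, fun t ↦ ?_⟩
    · exact (map_ne_zero_iff _ ((Module.End.isUnit_iff _).1 (ρ (revGL n)).isUnit).1).2 hv
    · set h := (revGL n)⁻¹ * (invTranspose g)⁻¹ * revGL n with hh
      have hh_unitri : IsUnitri h := by
        constructor
        · intro i
          simp [h, revGL_inv_mul_mul_apply, hg.1]
        · intro i j hij
          simp [h, revGL_inv_mul_mul_apply, hg.2, hij]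
      have hfix : (ρ h⁻¹ : V →ₗ[ℂ] V) v = v := by
        conv_lhs => rw [← hunitri h hh_unitri]
        simp [← Module.End.mul_apply]
      rw [MonoidHom.comp_apply, hconj g h⁻¹ (by simp [hh]), hfix]
    · have hrev : (revGL n)⁻¹ * (invTranspose (diagGL t))⁻¹ * revGL n =
          (diagGL fun i ↦ (t i.rev)⁻¹)⁻¹ := by
        refine Units.ext (ext fun i j ↦ ?_)
        change _ = diagonal (fun i ↦ (((t i.rev)⁻¹⁻¹ : ℂˣ) : ℂ)) i j
        rcases eq_or_ne i j with rfl | hij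
        · simp [revGL_inv_mul_mul_apply]
        · simp [revGL_inv_mul_mul_apply, hij, hij.symm]
      rw [MonoidHom.comp_apply, hconj _ _ hrev, hdiag, map_smul]
      congr 1
      simpa using Equiv.prod_comp Fin.revPerm fun i ↦ (t i : ℂ) ^ (-ω i.rev)

end InvTranspose

lemma lenPos_neg_rev {n : ℕ} (ω : Fin n → ℤ) : lenPos (fun i ↦ -ω i.rev) = lenNeg ω := by
  refine Finset.card_equiv Fin.revPerm fun i ↦ ?_
  simp

theorem length_le_of_trivial_constituent_general {m k : ℕ} {ω : Fin (m + k) → ℤ} {V : Type*}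
    [AddCommGroup V] [Module ℂ V] {ρ : GL (Fin (m + k)) ℂ →* (V →ₗ[ℂ] V)ˣ}
    (hρ : IsHWRep (m + k) ρ ω) {v : V} (hv : v ≠ 0)
    (hfix : ∀ h : GL (Fin k) ℂ, (ρ (embBR m k h) : V →ₗ[ℂ] V) v = v) :
    lenPos ω ≤ m ∧ lenNeg ω ≤ m :=
  ⟨hρ.lenPos_le hv hfix, lenPos_neg_rev ω ▸ hρ.comp_invTranspose.lenPos_le hv fun h ↦ by
    rw [MonoidHom.comp_apply, invTranspose_embBR, hfix]⟩

/-- If the restriction of the irreducible algebraic representation `V_n(λ⁺,λ⁻)` of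
`GL_n(ℂ)` (`n = m + k`, with `ℓ(λ⁺) + ℓ(λ⁻) < n`, encoded by the dominant weight `ω`)
to `GL_{n-m}(ℂ)` embedded in the last `n − m` coordinates contains a trivial
constituent (a nonzero invariant vector), then `ℓ(λ⁺) + ℓ(λ⁻) ≤ 2m`. -/
theorem length_le_of_trivial_constituent (m k : ℕ) (hk : 0 < k)
    (ω : Fin (m + k) → ℤ) (hlen : lenPos ω + lenNeg ω < m + k)
    (V : Type*) [AddCommGroup V] [Module ℂ V]
    (ρ : GL (Fin (m + k)) ℂ →* (V →ₗ[ℂ] V)ˣ) (hρ : IsHWRep (m + k) ρ ω)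
    (v : V) (hv : v ≠ 0)
    (hfix : ∀ h : GL (Fin k) ℂ, (ρ (embBR m k h) : V →ₗ[ℂ] V) v = v) :
    lenPos ω + lenNeg ω ≤ 2 * m := by
  have := length_le_of_trivial_constituent_general hρ hv hfix
  lia
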